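/- For fixed β ∈ (0,2), t₁, t₂ ∈ (0,∞) and every s ∈ [0, min(t₁,t₂)], the quantity Ψ_R(t₁,t₂;s) = R^{β−4} ∫_{ℝ²×ℝ²} φ_{t₁,R}(s,y) φ_{t₂,R}(s,z) ‖y−z‖^{−β} dy dz converges, as R → ∞, to 4π² c_β κ_β (t₁−s)(t₂−s). -/

import Mathlib

/-!
Rescaling both spatial variables by `R` turns `φ_{t,R}(s, ·)` into the mass which the kernel of
radius `(t - s) / R` and total mass `t - s` gives to the unit disk. These masses are bounded, their
supports stay in a fixed ball, and off the unit circle they tend to `t - s` times the indicator of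
the unit disk. Since `‖y - z‖ ^ (-β)` is locally integrable, dominated convergence yields the limit
`(t₁ - s) (t₂ - s)` times the Riesz energy of the unit disk.

The Riesz kernel is a mixture of Gaussians, and the Gaussian energy of a finite measure `ν` with
Fourier transform `ν̂` is a Gaussian average of `|ν̂|²`. By Tonelli, the Riesz energy of `ν` is a
constant times `∫ ‖ξ‖ ^ (β - d) |ν̂(ξ)|² dξ`. For the disk, `ν̂` is radial, and slicing
perpendicularly to `ξ` gives `ν̂(ξ) = 2 π J₁(‖ξ‖) / ‖ξ‖`.
-/

open MeasureTheory Real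

noncomputable section

/-- `ℝ²` with the Euclidean norm. -/
abbrev E2 : Type := EuclideanSpace ℝ (Fin 2)

/-- The fundamental solution of the 2D wave equation. -/
def G (t : ℝ) (x : E2) : ℝ :=
  if ‖x‖ < t then (2 * π * Real.sqrt (t ^ 2 - ‖x‖ ^ 2))⁻¹ else 0

/-- `φ_{t,R}(s,y) = ∫_{B_R} G_{t-s}(x-y) dx`. -/
def phi (t R s : ℝ) (y : E2) : ℝ :=
  ∫ x in Metric.closedBall (0 : E2) R, G (t - s) (x - y)

/-- `Ψ_R(t₁,t₂;s) = R^{β-4} ∫∫ φ_{t₁,R}(s,y) φ_{t₂,R}(s,z) ‖y-z‖^{-β} dy dz`. -/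
def Psi (β t₁ t₂ R s : ℝ) : ℝ :=
  R ^ (β - 4) * ∫ y : E2, ∫ z : E2, phi t₁ R s y * phi t₂ R s z * ‖y - z‖ ^ (-β)

/-- The Bessel function of the first kind of order one:
`J₁(x) = (x/π) ∫₀^π sin²θ cos(x cos θ) dθ`. -/
def J1 (x : ℝ) : ℝ :=
  x / π * ∫ θ in (0:ℝ)..π, Real.sin θ ^ 2 * Real.cos (x * Real.cos θ)

/-- `c_β = Γ(1-β/2)/(π 4^{β/2} Γ(β/2))`. -/
def cBeta (β : ℝ) : ℝ :=
  Real.Gamma (1 - β / 2) / (π * (4 : ℝ) ^ (β / 2) * Real.Gamma (β / 2))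

/-- `κ_β = ∫_{ℝ²} ‖ξ‖^{β-4} J₁(‖ξ‖)² dξ`. -/
def kappaBeta (β : ℝ) : ℝ :=
  ∫ ξ : E2, ‖ξ‖ ^ (β - 4) * (J1 ‖ξ‖) ^ 2

open Filter Metric Module Set Topology

section BallIntegral

variable {E : Type*} [NormedAddCommGroup E] [MeasurableSpace E] {μ : Measure E} {f : E → ℝ}

variable (μ) in
/-- The mass `∫_{B_R} f (x - y) dx` that the translate of the kernel `f` centred at `y` puts on the
closed ball of radius `R`. The function `phi t R s` is the case `f = G (t - s)`. -/
def ballIntegral (f : E → ℝ) (R : ℝ) (y : E) : ℝ :=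
  ∫ x in closedBall 0 R, f (x - y) ∂μ

lemma ballIntegral_eq_zero {T R : ℝ} (hT : f.support ⊆ closedBall 0 T) {y : E}
    (hy : R + T < ‖y‖) : ballIntegral μ f R y = 0 := by
  refine setIntegral_eq_zero_of_forall_eq_zero fun x hx => ?_
  refine Function.notMem_support.1 fun hxy => ?_
  have hx : ‖x‖ ≤ R := by simpa using hx
  have hxy : ‖x - y‖ ≤ T := by simpa using hT hxy
  linarith [norm_sub_norm_le y x, norm_sub_rev x y]

variable [BorelSpace E]

section Invariant

variable [μ.IsAddRightInvariant]

lemma abs_ballIntegral_le (hf : Integrable f μ) (R : ℝ) (y : E) :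
    |ballIntegral μ f R y| ≤ ∫ x, |f x| ∂μ :=
  calc |ballIntegral μ f R y|
    _ ≤ ∫ x in closedBall 0 R, |f (x - y)| ∂μ := abs_integral_le_integral_abs
    _ ≤ ∫ x, |f (x - y)| ∂μ :=
      setIntegral_le_integral (hf.abs.comp_sub_right y) (.of_forall fun _ => abs_nonneg _)
    _ = ∫ x, |f x| ∂μ := integral_sub_right_eq_self (|f ·|) y

lemma ballIntegral_eq_integral {T R : ℝ} (hT : f.support ⊆ closedBall 0 T) {y : E}
    (hy : ‖y‖ + T ≤ R) : ballIntegral μ f R y = ∫ x, f x ∂μ := by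
  rw [ballIntegral, setIntegral_eq_integral_of_forall_compl_eq_zero,
    integral_sub_right_eq_self f y]
  refine fun x hx => Function.notMem_support.1 fun hxy => hx ?_
  have hxy : ‖x - y‖ ≤ T := by simpa using hT hxy
  rw [mem_closedBall_zero_iff]
  linarith [norm_sub_norm_le x y]

-- Off the unit sphere the function is eventually constant in `R`.
lemma tendsto_ballIntegral_smul [NormedSpace ℝ E] (hf : HasCompactSupport f) {y : E}
    (hy : ‖y‖ ≠ 1) :
    Tendsto (fun R : ℝ => ballIntegral μ f R (R • y)) atTop
      (𝓝 ((ball (0 : E) 1).indicator (fun _ => ∫ x, f x ∂μ) y)) := by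
  obtain ⟨T, hT⟩ := hf.isCompact.isBounded.subset_closedBall 0
  replace hT : f.support ⊆ closedBall 0 T := (subset_tsupport f).trans hT
  refine tendsto_const_nhds.congr' ?_
  rcases hy.lt_or_gt with h | h
  · have hgap : 0 < 1 - ‖y‖ := sub_pos.2 h
    filter_upwards [eventually_ge_atTop (T / (1 - ‖y‖)), eventually_ge_atTop 0] with R hR hR0
    rw [div_le_iff₀ hgap] at hR
    rw [indicator_of_mem (by simpa using h), ballIntegral_eq_integral hT]
    rw [norm_smul, norm_of_nonneg hR0]
    linarith
  · have hgap : 0 < ‖y‖ - 1 := sub_pos.2 h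
    filter_upwards [eventually_gt_atTop (T / (‖y‖ - 1)), eventually_ge_atTop 0] with R hR hR0
    rw [div_lt_iff₀ hgap] at hR
    rw [indicator_of_notMem (by simpa using h.le), ballIntegral_eq_zero hT]
    rw [norm_smul, norm_of_nonneg hR0]
    linarith

end Invariant

end BallIntegral

section ScalingLimit

variable {E : Type*} [NormedAddCommGroup E] [NormedSpace ℝ E] [FiniteDimensional ℝ E]
  [MeasurableSpace E] [BorelSpace E] (μ : Measure E) [μ.IsAddHaarMeasure]

lemma integrableOn_prod_norm_sub_rpow_neg [Nontrivial E] {β : ℝ} (hβ : β < finrank ℝ E)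
    {s t : Set E} (hs : Bornology.IsBounded s) (ht : Bornology.IsBounded t) :
    IntegrableOn (fun p : E × E => ‖p.1 - p.2‖ ^ (-β)) (s ×ˢ t) (μ.prod μ) := by
  obtain ⟨r, hr⟩ := (hs.union ht).subset_closedBall 0
  let B := closedBall (0 : E) r
  let D := closedBall (0 : E) (r + r)
  have hB : Integrable (B.indicator fun _ => (1 : ℝ)) μ :=
    (integrable_indicator_iff measurableSet_closedBall).2
      (integrableOn_const measure_closedBall_lt_top.ne)
  have hD : Integrable (D.indicator fun x => ‖x‖ ^ (-β)) μ := by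
    have hloc : LocallyIntegrable (fun x : E => ‖x‖ ^ (-β)) μ :=
      locallyIntegrable_of_norm_le_rpow (C := 1) finrank_pos hβ
        (.of_forall fun x => by rw [norm_of_nonneg (by positivity), one_mul])
        (Measurable.aestronglyMeasurable (by fun_prop))
    exact (integrable_indicator_iff measurableSet_closedBall).2
      (hloc.integrableOn_isCompact (isCompact_closedBall 0 _))
  have hBD := (hB.convolution_integrand (.mul ℝ ℝ) hD).integrableOn (s := B ×ˢ B)
  refine (hBD.congr_fun ?_ (measurableSet_closedBall.prod measurableSet_closedBall)).mono_set
    (prod_mono (subset_union_left.trans hr) (subset_union_right.trans hr))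
  rintro ⟨y, z⟩ ⟨hy, hz⟩
  have hyz : y - z ∈ D := by
    simp only [B, D, mem_closedBall_zero_iff] at hy hz ⊢
    exact (norm_sub_le y z).trans (add_le_add hy hz)
  simp only [indicator_of_mem hz, indicator_of_mem hyz, ContinuousLinearMap.mul_apply', one_mul]

lemma rpow_mul_integral_integral_norm_sub_rpow_neg (f g : E → ℝ) (β : ℝ) {R : ℝ} (hR : 0 < R) :
    R ^ (β - 2 * finrank ℝ E) * ∫ y, ∫ z, f y * g z * ‖y - z‖ ^ (-β) ∂μ ∂μ =
      ∫ y, ∫ z, f (R • y) * g (R • z) * ‖y - z‖ ^ (-β) ∂μ ∂μ := by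
  have hkernel (y z : E) : f (R • y) * g (R • z) * ‖y - z‖ ^ (-β) =
      R ^ β * (f (R • y) * g (R • z) * ‖R • y - R • z‖ ^ (-β)) := by
    rw [← smul_sub, norm_smul, norm_of_nonneg hR.le, mul_rpow hR.le (norm_nonneg _), rpow_neg hR.le]
    field_simp
  have hinner (y : E) : ∫ z, f (R • y) * g (R • z) * ‖R • y - R • z‖ ^ (-β) ∂μ =
      (R ^ finrank ℝ E)⁻¹ * ∫ z, f (R • y) * g z * ‖R • y - z‖ ^ (-β) ∂μ :=
    Measure.integral_comp_smul_of_nonneg μ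
      (fun z => f (R • y) * g z * ‖R • y - z‖ ^ (-β)) R (hR := hR.le)
  have houter := Measure.integral_comp_smul_of_nonneg μ
    (fun y => ∫ z, f y * g z * ‖y - z‖ ^ (-β) ∂μ) R (hR := hR.le)
  have hpow : R ^ (2 * finrank ℝ E : ℝ) = R ^ finrank ℝ E * R ^ finrank ℝ E := by
    rw [two_mul, rpow_add hR, rpow_natCast]
  simp_rw [hkernel, integral_const_mul, hinner, integral_const_mul]
  rw [houter, rpow_sub hR, hpow, smul_eq_mul]
  field_simp

variable {μ} in
lemma integrable_ballIntegral (hf : Integrable f μ) (R : ℝ) :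
    Integrable (ballIntegral μ f R) μ := by
  have hball : Integrable ((closedBall (0 : E) R).indicator fun _ => (1 : ℝ)) μ :=
    (integrable_indicator_iff measurableSet_closedBall).2
      (integrableOn_const measure_closedBall_lt_top.ne)
  refine (hball.integrable_convolution (.mul ℝ ℝ) hf.comp_neg).congr (.of_forall fun y => ?_)
  rw [ballIntegral, ← integral_indicator measurableSet_closedBall, convolution]
  refine integral_congr_ae (.of_forall fun x => ?_)
  by_cases hx : x ∈ closedBall (0 : E) R <;> simp [hx]

variable {μ} in
lemma exists_integrable_bound_ballIntegral_mul_rpow [Nontrivial E] {f g : E → ℝ}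
    (hf : Integrable f μ) (hg : Integrable g μ) (hfc : HasCompactSupport f)
    (hgc : HasCompactSupport g) {β : ℝ} (hβ : β < finrank ℝ E) :
    ∃ b : E × E → ℝ, Integrable b (μ.prod μ) ∧ ∀ R : ℝ, 1 ≤ R → ∀ p,
      |ballIntegral μ f R (R • p.1) * ballIntegral μ g R (R • p.2) * ‖p.1 - p.2‖ ^ (-β)| ≤ b p := by
  obtain ⟨T, hT, hsupp⟩ :=
    (hfc.isCompact.isBounded.union hgc.isCompact.isBounded).subset_closedBall_lt 0 0
  let B := closedBall (0 : E) (1 + T)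
  refine ⟨(B ×ˢ B).indicator fun p => (∫ x, |f x| ∂μ) * (∫ x, |g x| ∂μ) * ‖p.1 - p.2‖ ^ (-β),
    (integrable_indicator_iff (measurableSet_closedBall.prod measurableSet_closedBall)).2
      ((integrableOn_prod_norm_sub_rpow_neg μ hβ isBounded_closedBall
        isBounded_closedBall).const_mul _), fun R hR p => ?_⟩
  have hfar {h : E → ℝ} (hh : h.support ⊆ closedBall 0 T) {y : E} (hy : y ∉ B) :
      ballIntegral μ h R (R • y) = 0 := by
    refine ballIntegral_eq_zero hh ?_
    rw [mem_closedBall_zero_iff, not_le] at hy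
    rw [norm_smul, norm_of_nonneg (by linarith)]
    nlinarith
  by_cases hp : p ∈ B ×ˢ B
  · rw [indicator_of_mem hp, abs_mul, abs_mul, abs_of_nonneg (a := ‖_‖ ^ _) (by positivity)]
    gcongr
    exacts [abs_ballIntegral_le hf _ _, abs_ballIntegral_le hg _ _]
  · rw [indicator_of_notMem hp]
    rcases not_and_or.1 hp with hy | hz
    · simp [hfar ((subset_tsupport f).trans (subset_union_left.trans hsupp)) hy]
    · simp [hfar ((subset_tsupport g).trans (subset_union_right.trans hsupp)) hz]

lemma ae_tendsto_ballIntegral_mul_rpow {f g : E → ℝ} (hfc : HasCompactSupport f)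
    (hgc : HasCompactSupport g) (β : ℝ) :
    ∀ᵐ p ∂μ.prod μ, Tendsto (fun R : ℝ =>
        ballIntegral μ f R (R • p.1) * ballIntegral μ g R (R • p.2) * ‖p.1 - p.2‖ ^ (-β)) atTop
      (𝓝 ((ball (0 : E) 1 ×ˢ ball (0 : E) 1).indicator
        (fun p => (∫ x, f x ∂μ) * (∫ x, g x ∂μ) * ‖p.1 - p.2‖ ^ (-β)) p)) := by
  have hsphere : ∀ᵐ x ∂μ, ‖x‖ ≠ 1 := by
    simpa using measure_eq_zero_iff_ae_notMem.1 (Measure.addHaar_sphere_of_ne_zero μ 0 one_ne_zero)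
  filter_upwards [Measure.quasiMeasurePreserving_fst.ae hsphere,
    Measure.quasiMeasurePreserving_snd.ae hsphere] with p hy hz
  have hlim := ((tendsto_ballIntegral_smul (μ := μ) hfc hy).mul
    (tendsto_ballIntegral_smul (μ := μ) hgc hz)).mul_const (‖p.1 - p.2‖ ^ (-β))
  by_cases hp₁ : p.1 ∈ ball (0 : E) 1 <;> by_cases hp₂ : p.2 ∈ ball (0 : E) 1 <;>
    simpa [indicator, mem_prod, hp₁, hp₂] using hlim

theorem tendsto_rpow_mul_integral_ballIntegral [Nontrivial E] {f g : E → ℝ} (hf : Integrable f μ)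
    (hg : Integrable g μ) (hfc : HasCompactSupport f) (hgc : HasCompactSupport g) {β : ℝ}
    (hβ : β < finrank ℝ E) :
    Tendsto (fun R : ℝ => R ^ (β - 2 * finrank ℝ E) *
        ∫ y, ∫ z, ballIntegral μ f R y * ballIntegral μ g R z * ‖y - z‖ ^ (-β) ∂μ ∂μ) atTop
      (𝓝 ((∫ x, f x ∂μ) * (∫ x, g x ∂μ) *
        ∫ p in ball 0 1 ×ˢ ball 0 1, ‖p.1 - p.2‖ ^ (-β) ∂μ.prod μ)) := by
  obtain ⟨b, hb, hF_le⟩ := exists_integrable_bound_ballIntegral_mul_rpow hf hg hfc hgc hβ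
  let F (R : ℝ) (p : E × E) : ℝ :=
    ballIntegral μ f R (R • p.1) * ballIntegral μ g R (R • p.2) * ‖p.1 - p.2‖ ^ (-β)
  have hF_meas (R : ℝ) (hR : 1 ≤ R) : AEStronglyMeasurable (F R) (μ.prod μ) := by
    have hR0 : R ≠ 0 := by positivity
    exact (((integrable_ballIntegral hf R).comp_smul hR0).mul_prod
      ((integrable_ballIntegral hg R).comp_smul hR0)).aestronglyMeasurable.mul
        (Measurable.aestronglyMeasurable (by fun_prop))
  have hlim := tendsto_integral_filter_of_dominated_convergence b
    ((eventually_ge_atTop 1).mono hF_meas)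
    ((eventually_ge_atTop 1).mono fun R hR => .of_forall (hF_le R hR)) hb
    (ae_tendsto_ballIntegral_mul_rpow μ hfc hgc β)
  rw [integral_indicator (measurableSet_ball.prod measurableSet_ball), integral_const_mul] at hlim
  refine hlim.congr' ?_
  filter_upwards [eventually_ge_atTop 1] with R hR
  rw [rpow_mul_integral_integral_norm_sub_rpow_neg μ _ _ β (by positivity)]
  exact integral_prod _ (hb.mono' (hF_meas R hR) (.of_forall (hF_le R hR)))

end ScalingLimit

section WaveKernel

lemma hasDerivAt_neg_sqrt_sq_sub_sq {T r : ℝ} (hr : r ^ 2 < T ^ 2) :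
    HasDerivAt (fun r => -√(T ^ 2 - r ^ 2)) (r / √(T ^ 2 - r ^ 2)) r := by
  convert! ((((hasDerivAt_id r).pow 2).const_sub (T ^ 2)).sqrt (sub_pos.2 hr).ne').neg using 1
  simp [neg_div, mul_div_mul_left]

lemma integrableOn_div_sqrt_sq_sub_sq (T : ℝ) :
    IntegrableOn (fun r => r / √(T ^ 2 - r ^ 2)) (Ioc 0 T) := by
  refine intervalIntegral.integrableOn_deriv_of_nonneg (by fun_prop)
    (fun r hr => hasDerivAt_neg_sqrt_sq_sub_sq ?_) fun r hr => ?_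
  · exact pow_lt_pow_left₀ hr.2 hr.1.le two_ne_zero
  · exact div_nonneg hr.1.le (sqrt_nonneg _)

lemma integral_div_sqrt_sq_sub_sq {T : ℝ} (hT : 0 ≤ T) :
    ∫ r in 0..T, r / √(T ^ 2 - r ^ 2) = T := by
  rw [intervalIntegral.integral_eq_sub_of_hasDerivAt_of_le hT (by fun_prop)
    (fun r hr => hasDerivAt_neg_sqrt_sq_sub_sq (pow_lt_pow_left₀ hr.2 hr.1.le two_ne_zero))
    ((intervalIntegrable_iff_integrableOn_Ioc_of_le hT).2 (integrableOn_div_sqrt_sq_sub_sq T))]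
  simp [sqrt_sq hT]

/-- The radial profile of `G T`. -/
def waveProfile (T r : ℝ) : ℝ :=
  if r < T then (2 * π * √(T ^ 2 - r ^ 2))⁻¹ else 0

lemma mul_waveProfile {T r : ℝ} (hr : 0 < r) :
    r * waveProfile T r =
      (Ioc 0 T).indicator (fun r => (2 * π)⁻¹ * (r / √(T ^ 2 - r ^ 2))) r := by
  rcases lt_trichotomy r T with h | rfl | h
  · rw [waveProfile, if_pos h, indicator_of_mem (mem_Ioc.2 ⟨hr, h.le⟩), mul_inv]
    ring
  · simp [waveProfile, indicator]
  · rw [waveProfile, if_neg h.not_gt, mul_zero, indicator_of_notMem]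
    exact fun hrT => h.not_ge hrT.2

lemma integrable_G (T : ℝ) : Integrable (G T) := by
  change Integrable fun x : E2 => waveProfile T ‖x‖
  rw [integrable_fun_norm_addHaar]
  have hradial : IntegrableOn
      ((Ioc 0 T).indicator fun r => (2 * π)⁻¹ * (r / √(T ^ 2 - r ^ 2))) (Ioi 0) :=
    ((integrable_indicator_iff measurableSet_Ioc).2
      ((integrableOn_div_sqrt_sq_sub_sq T).const_mul _)).integrableOn
  exact hradial.congr_fun (fun r hr => by simpa using (mul_waveProfile hr).symm)
    measurableSet_Ioi

lemma integral_G {T : ℝ} (hT : 0 ≤ T) : ∫ x, G T x = T := by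
  have hradial : ∫ r in Ioi (0 : ℝ), r * waveProfile T r = (2 * π)⁻¹ * T := by
    rw [setIntegral_congr_fun measurableSet_Ioi fun r hr => mul_waveProfile hr,
      setIntegral_indicator measurableSet_Ioc,
      inter_eq_self_of_subset_right Ioc_subset_Ioi_self, integral_const_mul,
      ← intervalIntegral.integral_of_le hT, integral_div_sqrt_sq_sub_sq hT]
  have hpolar : ∫ x : E2, waveProfile T ‖x‖ = 2 * π * ∫ r in Ioi (0 : ℝ), r * waveProfile T r := by
    rw [integral_fun_norm_addHaar]
    simp [Measure.real, ENNReal.toReal_ofReal pi_pos.le, mul_assoc]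
  calc ∫ x, G T x
    _ = 2 * π * ∫ r in Ioi (0 : ℝ), r * waveProfile T r := hpolar
    _ = T := by rw [hradial]; field_simp

lemma hasCompactSupport_G (T : ℝ) : HasCompactSupport (G T) :=
  HasCompactSupport.of_support_subset_isCompact (isCompact_closedBall (0 : E2) T) fun x hx => by
    have hxT : ‖x‖ < T := by
      by_contra h
      exact hx (if_neg h)
    simpa using hxT.le

theorem tendsto_Psi {β t₁ t₂ s : ℝ} (hβ : β < 2) (h₁ : s ≤ t₁) (h₂ : s ≤ t₂) :
    Tendsto (fun R : ℝ => Psi β t₁ t₂ R s) atTop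
      (𝓝 ((t₁ - s) * (t₂ - s) *
        ∫ p in ball (0 : E2) 1 ×ˢ ball (0 : E2) 1, ‖p.1 - p.2‖ ^ (-β))) := by
  have h := tendsto_rpow_mul_integral_ballIntegral (volume : Measure E2)
    (integrable_G (t₁ - s)) (integrable_G (t₂ - s)) (hasCompactSupport_G _)
    (hasCompactSupport_G _) (β := β) (by simpa using hβ)
  have hexp : β - 2 * finrank ℝ E2 = β - 4 := by
    rw [finrank_euclideanSpace_fin]
    norm_num
  rw [integral_G (sub_nonneg.2 h₁), integral_G (sub_nonneg.2 h₂), hexp] at h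
  exact h

end WaveKernel

section GammaIntegral

open scoped ENNReal

lemma lintegral_Ioi_comp_inv (f : ℝ → ℝ≥0∞) :
    ∫⁻ u in Ioi (0 : ℝ), .ofReal ((u ^ 2)⁻¹) * f u⁻¹ = ∫⁻ u in Ioi (0 : ℝ), f u := by
  have hderiv (u : ℝ) (hu : u ∈ Ioi 0) : HasDerivWithinAt Inv.inv (-(u ^ 2)⁻¹) (Ioi 0) u :=
    (hasDerivAt_inv hu.ne').hasDerivWithinAt
  have himage : Inv.inv '' Ioi (0 : ℝ) = Ioi 0 := by
    ext u
    simp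
  have h :=
    lintegral_image_eq_lintegral_abs_deriv_mul measurableSet_Ioi hderiv inv_injective.injOn f
  rw [himage] at h
  simp only [h, abs_neg, abs_inv, abs_pow, sq_abs]

lemma lintegral_rpow_mul_exp_neg_mul_Ioi {a r : ℝ} (ha : 0 < a) (hr : 0 ≤ r) :
    ∫⁻ u in Ioi (0 : ℝ), .ofReal (u ^ (a - 1) * exp (-(r * u))) =
      .ofReal (Gamma a) * ENNReal.ofReal r ^ (-a) := by
  have hnonneg : 0 ≤ᵐ[volume.restrict (Ioi 0)] fun u : ℝ => u ^ (a - 1) * exp (-(r * u)) := by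
    filter_upwards [ae_restrict_mem measurableSet_Ioi] with u hu
    exact mul_nonneg (rpow_nonneg (le_of_lt hu) _) (exp_pos _).le
  have hΓ : 0 < Gamma a := Gamma_pos_of_pos ha
  rcases hr.eq_or_lt with rfl | hr
  · rw [ENNReal.ofReal_zero, ENNReal.zero_rpow_of_neg (neg_neg_of_pos ha),
      ENNReal.mul_top (by simpa using hΓ)]
    by_contra h
    refine not_integrableOn_Ioi_rpow (a - 1) ?_
    simpa [IntegrableOn] using (lintegral_ofReal_ne_top_iff_integrable
      (Measurable.aestronglyMeasurable (by fun_prop)) hnonneg).1 h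
  · have hint := integral_rpow_mul_exp_neg_mul_Ioi ha hr
    have hne : (1 / r) ^ a * Gamma a ≠ 0 := by positivity
    rw [← ofReal_integral_eq_lintegral_ofReal (.of_integral_ne_zero (hint ▸ hne)) hnonneg, hint,
      mul_comm, ENNReal.ofReal_mul hΓ.le, one_div, inv_rpow hr.le, ← rpow_neg hr.le,
      ENNReal.ofReal_rpow_of_pos hr]

lemma lintegral_rpow_mul_exp_neg_div_Ioi {a r : ℝ} (ha : 0 < a) (hr : 0 ≤ r) :
    ∫⁻ u in Ioi (0 : ℝ), .ofReal (u ^ (-a - 1) * exp (-(r / u))) =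
      .ofReal (Gamma a) * ENNReal.ofReal r ^ (-a) := by
  rw [← lintegral_rpow_mul_exp_neg_mul_Ioi ha hr, ← lintegral_Ioi_comp_inv]
  refine setLIntegral_congr_fun measurableSet_Ioi fun u (hu : 0 < u) => ?_
  rw [← ENNReal.ofReal_mul (by positivity), div_inv_eq_mul, ← mul_assoc, inv_rpow hu.le,
    ← rpow_neg hu.le, ← rpow_natCast, ← rpow_neg hu.le, ← rpow_add hu]
  congr 3
  push_cast
  ring

end GammaIntegral

section RieszEnergy

open Complex (I)
open scoped ENNReal RealInnerProductSpace

section FourierGaussian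

variable {V : Type*} [NormedAddCommGroup V] [InnerProductSpace ℝ V] [MeasurableSpace V]
  [BorelSpace V]

lemma charFun_map_sub_prod [SecondCountableTopology V] (ν : Measure V) [IsFiniteMeasure ν] (ξ : V) :
    charFun ((ν.prod ν).map fun p => p.1 - p.2) ξ = ‖charFun ν ξ‖ ^ 2 := by
  have hsplit (p : V × V) : Complex.exp (⟪p.1 - p.2, ξ⟫ * I) =
      Complex.exp (⟪p.1, ξ⟫ * I) * Complex.exp (⟪p.2, -ξ⟫ * I) := by
    rw [← Complex.exp_add, inner_sub_left, inner_neg_right]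
    push_cast
    ring_nf
  rw [charFun_apply, integral_map (by fun_prop) (by fun_prop)]
  simp_rw [hsplit]
  rw [integral_prod_mul (fun x => Complex.exp (⟪x, ξ⟫ * I)) fun x => Complex.exp (⟪x, -ξ⟫ * I),
    ← charFun_apply, ← charFun_apply, charFun_neg, Complex.mul_conj']

variable [FiniteDimensional ℝ V]

lemma integral_cexp_neg_mul_sq_norm_mul_charFun {b : ℂ} (hb : 0 < b.re) (ρ : Measure V)
    [IsFiniteMeasure ρ] :
    ∫ ξ, Complex.exp (-b * ‖ξ‖ ^ 2) * charFun ρ ξ =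
      (π / b) ^ (finrank ℝ V / 2 : ℂ) * ∫ x, Complex.exp (-(‖x‖ ^ 2 / (4 * b))) ∂ρ := by
  let F (ξ x : V) : ℂ := Complex.exp (-b * ‖ξ‖ ^ 2 + I * ⟪x, ξ⟫)
  have hF : Integrable (Function.uncurry F) (volume.prod ρ) := by
    have hgauss : Integrable fun ξ : V => Complex.exp (-b * ‖ξ‖ ^ 2) := by
      simpa using GaussianFourier.integrable_cexp_neg_mul_sq_norm_add hb 0 (0 : V)
    refine (hgauss.comp_fst ρ).mono (Continuous.aestronglyMeasurable (by fun_prop))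
      (.of_forall fun p => ?_)
    simp [F, Function.uncurry, Complex.norm_exp]
  have hleft (ξ : V) : Complex.exp (-b * ‖ξ‖ ^ 2) * charFun ρ ξ = ∫ x, F ξ x ∂ρ := by
    simp_rw [F, Complex.exp_add, integral_const_mul, charFun_apply, mul_comm I]
  have hright (x : V) : ∫ ξ, F ξ x =
      (π / b) ^ (finrank ℝ V / 2 : ℂ) * Complex.exp (-(‖x‖ ^ 2 / (4 * b))) := by
    simp only [F, GaussianFourier.integral_cexp_neg_mul_sq_norm_add hb, Complex.I_sq]
    ring_nf
  simp_rw [hleft]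
  rw [integral_integral_swap hF]
  simp_rw [hright, integral_const_mul]

lemma integral_exp_neg_mul_sq_norm_sub {u : ℝ} (hu : 0 < u) (ν : Measure V) [IsFiniteMeasure ν] :
    ∫ p, exp (-(u * ‖p.1 - p.2‖ ^ 2)) ∂ν.prod ν =
      (4 * π * u) ^ (-(finrank ℝ V / 2 : ℝ)) *
        ∫ ξ, exp (-(‖ξ‖ ^ 2 / (4 * u))) * ‖charFun ν ξ‖ ^ 2 := by
  have hb : 0 < ((4 * u : ℝ) : ℂ)⁻¹.re := by
    rw [← Complex.ofReal_inv, Complex.ofReal_re]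
    positivity
  have hu_ne : (u : ℂ) ≠ 0 := mod_cast hu.ne'
  have hfreq (ξ : V) : Complex.exp (-((4 * u : ℝ) : ℂ)⁻¹ * ‖ξ‖ ^ 2) =
      (exp (-(‖ξ‖ ^ 2 / (4 * u))) : ℝ) := by
    push_cast
    congr 1
    field_simp
  have hspace (x : V) : Complex.exp (-(‖x‖ ^ 2 / (4 * ((4 * u : ℝ) : ℂ)⁻¹))) =
      (exp (-(u * ‖x‖ ^ 2)) : ℝ) := by
    push_cast
    congr 1
    field_simp
  have hconst : (π / ((4 * u : ℝ) : ℂ)⁻¹) ^ (finrank ℝ V / 2 : ℂ) =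
      (((4 * π * u) ^ (finrank ℝ V / 2 : ℝ) : ℝ) : ℂ) := by
    rw [Complex.ofReal_cpow (by positivity)]
    push_cast
    congr 1
    field_simp
  have h := integral_cexp_neg_mul_sq_norm_mul_charFun hb ((ν.prod ν).map fun p => p.1 - p.2)
  rw [integral_map (by fun_prop) (by fun_prop), hconst] at h
  simp_rw [charFun_map_sub_prod, hfreq, hspace] at h
  norm_cast at h
  rw [h, ← mul_assoc, ← rpow_add (by positivity), neg_add_cancel, rpow_zero, one_mul]

lemma lintegral_exp_neg_mul_sq_norm_sub {u : ℝ} (hu : 0 < u) (ν : Measure V) [IsFiniteMeasure ν] :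
    ∫⁻ p, .ofReal (exp (-(u * ‖p.1 - p.2‖ ^ 2))) ∂ν.prod ν =
      .ofReal ((4 * π * u) ^ (-(finrank ℝ V / 2 : ℝ))) *
        ∫⁻ ξ, .ofReal (exp (-(‖ξ‖ ^ 2 / (4 * u)))) * ‖charFun ν ξ‖ₑ ^ 2 := by
  have hleft : Integrable (fun p : V × V => exp (-(u * ‖p.1 - p.2‖ ^ 2))) (ν.prod ν) :=
    .of_bound (Continuous.aestronglyMeasurable (by fun_prop)) 1 (.of_forall fun p => by
      rw [norm_of_nonneg (exp_pos _).le, exp_le_one_iff, neg_nonpos]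
      positivity)
  have hgauss : Integrable fun ξ : V => exp (-(‖ξ‖ ^ 2 / (4 * u))) := by
    have hint := GaussianFourier.integral_rexp_neg_mul_sq_norm (V := V) (b := (4 * u)⁻¹)
      (by positivity)
    simp_rw [neg_mul, inv_mul_eq_div] at hint
    refine .of_integral_ne_zero (hint ▸ ?_)
    positivity
  have hright : Integrable fun ξ : V => exp (-(‖ξ‖ ^ 2 / (4 * u))) * ‖charFun ν ξ‖ ^ 2 :=
    hgauss.mul_bdd (c := ν.real univ ^ 2) (Measurable.aestronglyMeasurable (by fun_prop))
      (.of_forall fun ξ => by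
        rw [norm_pow, norm_norm]
        gcongr
        exact norm_charFun_le ξ)
  have henorm (ξ : V) : ENNReal.ofReal (exp (-(‖ξ‖ ^ 2 / (4 * u)))) * ‖charFun ν ξ‖ₑ ^ 2 =
      .ofReal (exp (-(‖ξ‖ ^ 2 / (4 * u))) * ‖charFun ν ξ‖ ^ 2) := by
    rw [ENNReal.ofReal_mul (by positivity), ENNReal.ofReal_pow (by positivity), ofReal_norm]
  simp_rw [henorm]
  rw [← ofReal_integral_eq_lintegral_ofReal hleft (.of_forall fun _ => by positivity),
    ← ofReal_integral_eq_lintegral_ofReal hright (.of_forall fun _ => by positivity),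
    ← ENNReal.ofReal_mul (by positivity), integral_exp_neg_mul_sq_norm_sub hu]

end FourierGaussian

lemma ofReal_sq_norm_rpow {V : Type*} [SeminormedAddCommGroup V] (x : V) (a : ℝ) :
    ENNReal.ofReal (‖x‖ ^ 2) ^ a = ‖x‖ₑ ^ (2 * a) := by
  rw [ENNReal.ofReal_pow (norm_nonneg x), ofReal_norm, ← ENNReal.rpow_natCast, ← ENNReal.rpow_mul,
    Nat.cast_ofNat]

lemma enorm_rpow_neg_eq_lintegral_exp {V : Type*} [SeminormedAddCommGroup V] {β : ℝ} (hβ : 0 < β)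
    (x : V) : ‖x‖ₑ ^ (-β) = ENNReal.ofReal (Gamma (β / 2))⁻¹ *
      ∫⁻ u in Ioi (0 : ℝ), .ofReal (u ^ (β / 2 - 1)) * .ofReal (exp (-(u * ‖x‖ ^ 2))) := by
  have hΓ : 0 < Gamma (β / 2) := Gamma_pos_of_pos (by positivity)
  have hgamma := lintegral_rpow_mul_exp_neg_mul_Ioi (half_pos hβ) (sq_nonneg ‖x‖)
  have hsplit (u : ℝ) (hu : u ∈ Ioi 0) :
      ENNReal.ofReal (u ^ (β / 2 - 1) * exp (-(‖x‖ ^ 2 * u))) =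
        .ofReal (u ^ (β / 2 - 1)) * .ofReal (exp (-(u * ‖x‖ ^ 2))) := by
    rw [ENNReal.ofReal_mul (rpow_nonneg (le_of_lt hu) _), mul_comm u]
  rw [← setLIntegral_congr_fun measurableSet_Ioi hsplit, hgamma, ofReal_sq_norm_rpow, ← mul_assoc,
    ← ENNReal.ofReal_mul (by positivity), inv_mul_cancel₀ hΓ.ne', ENNReal.ofReal_one, one_mul,
    mul_neg, mul_div_cancel₀ β two_ne_zero]

/-- The constant in the (distributional) Fourier representation
`‖x‖ ^ (-β) = rieszConst d β * ∫ ‖ξ‖ ^ (β - d) e ^ (i⟪x, ξ⟫) dξ` of the Riesz kernel in dimension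
`d`. The dimension is a real parameter to avoid casts. -/
def rieszConst (d β : ℝ) : ℝ :=
  Gamma ((d - β) / 2) / (π ^ (d / 2) * 4 ^ (β / 2) * Gamma (β / 2))

lemma rieszConst_nonneg {d β : ℝ} (hβ : 0 ≤ β) (hd : β ≤ d) : 0 ≤ rieszConst d β :=
  div_nonneg (Gamma_nonneg_of_nonneg (by linarith))
    (mul_nonneg (by positivity) (Gamma_nonneg_of_nonneg (by linarith)))

lemma lintegral_rpow_mul_rpow_mul_exp_neg_div {V : Type*} [SeminormedAddCommGroup V] {d β : ℝ}
    (hβ : 0 < β) (hd : β < d) (ξ : V) :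
    ENNReal.ofReal (Gamma (β / 2))⁻¹ * ∫⁻ u in Ioi (0 : ℝ), .ofReal (u ^ (β / 2 - 1)) *
        (.ofReal ((4 * π * u) ^ (-(d / 2))) * .ofReal (exp (-(‖ξ‖ ^ 2 / (4 * u))))) =
      .ofReal (rieszConst d β) * ‖ξ‖ₑ ^ (β - d) := by
  have ha : 0 < (d - β) / 2 := by linarith
  have hgamma := lintegral_rpow_mul_exp_neg_div_Ioi ha (r := ‖ξ‖ ^ 2 / 4) (by positivity)
  have hsplit (u : ℝ) (hu : u ∈ Ioi 0) : ENNReal.ofReal (u ^ (β / 2 - 1)) *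
        (.ofReal ((4 * π * u) ^ (-(d / 2))) * .ofReal (exp (-(‖ξ‖ ^ 2 / (4 * u))))) =
      .ofReal ((4 * π) ^ (-(d / 2))) *
        .ofReal (u ^ (-((d - β) / 2) - 1) * exp (-(‖ξ‖ ^ 2 / 4 / u))) := by
    have hu : 0 < u := hu
    rw [← ENNReal.ofReal_mul (by positivity), ← ENNReal.ofReal_mul (by positivity),
      ← ENNReal.ofReal_mul (by positivity), mul_rpow (by positivity) hu.le, div_div,
      show -((d - β) / 2) - 1 = β / 2 - 1 + -(d / 2) by ring, rpow_add hu]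
    congr 1
    ring
  have hpow : ENNReal.ofReal (‖ξ‖ ^ 2 / 4) ^ (-((d - β) / 2)) =
      .ofReal (4 ^ ((d - β) / 2)) * ‖ξ‖ₑ ^ (β - d) := by
    rw [div_eq_inv_mul, ENNReal.ofReal_mul (by positivity),
      ENNReal.mul_rpow_of_ne_top ENNReal.ofReal_ne_top ENNReal.ofReal_ne_top,
      ENNReal.ofReal_rpow_of_pos (by positivity), inv_rpow (by positivity),
      ← rpow_neg (by positivity), neg_neg, ofReal_sq_norm_rpow]
    congr 2
    ring
  have hconst : (Gamma (β / 2))⁻¹ * (4 * π) ^ (-(d / 2)) * Gamma ((d - β) / 2) *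
      4 ^ ((d - β) / 2) = rieszConst d β := by
    rw [rieszConst, mul_rpow (by positivity) pi_pos.le, sub_div, rpow_sub (by positivity),
      rpow_neg (by positivity), rpow_neg pi_pos.le]
    field_simp
  rw [setLIntegral_congr_fun measurableSet_Ioi hsplit, lintegral_const_mul _ (by fun_prop), hgamma,
    hpow, ← hconst, ENNReal.ofReal_mul (by positivity), ENNReal.ofReal_mul (by positivity),
    ENNReal.ofReal_mul (by positivity)]
  ring

theorem lintegral_enorm_sub_rpow_neg {V : Type*} [NormedAddCommGroup V] [InnerProductSpace ℝ V]
    [FiniteDimensional ℝ V] [MeasurableSpace V] [BorelSpace V] {β : ℝ} (hβ : 0 < β)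
    (hd : β < finrank ℝ V) (ν : Measure V) [IsFiniteMeasure ν] :
    ∫⁻ p, ‖p.1 - p.2‖ₑ ^ (-β) ∂ν.prod ν =
      .ofReal (rieszConst (finrank ℝ V) β) *
        ∫⁻ ξ, ‖ξ‖ₑ ^ (β - finrank ℝ V) * ‖charFun ν ξ‖ₑ ^ 2 := by
  set d : ℝ := (finrank ℝ V : ℝ)
  let gauss (u : ℝ) (ξ : V) : ℝ≥0∞ := .ofReal (exp (-(‖ξ‖ ^ 2 / (4 * u))))
  calc ∫⁻ p, ‖p.1 - p.2‖ₑ ^ (-β) ∂ν.prod ν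
    _ = .ofReal (Gamma (β / 2))⁻¹ * ∫⁻ u in Ioi (0 : ℝ), .ofReal (u ^ (β / 2 - 1)) *
          ∫⁻ p, .ofReal (exp (-(u * ‖p.1 - p.2‖ ^ 2))) ∂ν.prod ν := by
      simp_rw [enorm_rpow_neg_eq_lintegral_exp hβ]
      rw [lintegral_const_mul _ (by fun_prop), lintegral_lintegral_swap (by fun_prop)]
      exact congrArg _ (lintegral_congr fun u => lintegral_const_mul _ (by fun_prop))
    _ = .ofReal (Gamma (β / 2))⁻¹ * ∫⁻ u in Ioi (0 : ℝ), ∫⁻ ξ, .ofReal (u ^ (β / 2 - 1)) *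
          (.ofReal ((4 * π * u) ^ (-(d / 2))) * gauss u ξ) * ‖charFun ν ξ‖ₑ ^ 2 := by
      congr 1
      refine setLIntegral_congr_fun measurableSet_Ioi fun u hu => ?_
      rw [lintegral_exp_neg_mul_sq_norm_sub hu, ← lintegral_const_mul _ (by fun_prop),
        ← lintegral_const_mul _ (by fun_prop)]
      simp only [gauss, mul_assoc, d]
    _ = ∫⁻ ξ, .ofReal (Gamma (β / 2))⁻¹ * (∫⁻ u in Ioi (0 : ℝ), .ofReal (u ^ (β / 2 - 1)) *
          (.ofReal ((4 * π * u) ^ (-(d / 2))) * gauss u ξ)) * ‖charFun ν ξ‖ₑ ^ 2 := by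
      rw [lintegral_lintegral_swap (by fun_prop), ← lintegral_const_mul _ (by fun_prop)]
      refine lintegral_congr fun ξ => ?_
      rw [lintegral_mul_const _ (by fun_prop), mul_assoc]
    _ = .ofReal (rieszConst d β) * ∫⁻ ξ, ‖ξ‖ₑ ^ (β - d) * ‖charFun ν ξ‖ₑ ^ 2 := by
      simp_rw [gauss, lintegral_rpow_mul_rpow_mul_exp_neg_div hβ hd, mul_assoc]
      exact lintegral_const_mul _ (by fun_prop)

lemma ae_prod_fst_ne_snd {α : Type*} [MeasurableSpace α] [MeasurableEq α] (μ ν : Measure α)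
    [NullSingletonClass ν] [SFinite ν] : ∀ᵐ p ∂μ.prod ν, p.1 ≠ p.2 := by
  refine (Measure.ae_prod_iff_ae_ae measurableSet_diagonal.compl).2 (.of_forall fun x => ?_)
  filter_upwards [Measure.ae_ne ν x] with y hy using hy.symm

theorem integral_norm_sub_rpow_neg {V : Type*} [NormedAddCommGroup V] [InnerProductSpace ℝ V]
    [FiniteDimensional ℝ V] [MeasurableSpace V] [BorelSpace V] {β : ℝ} (hβ : 0 < β)
    (hd : β < finrank ℝ V) (ν : Measure V) [IsFiniteMeasure ν] [NullSingletonClass ν] :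
    ∫ p, ‖p.1 - p.2‖ ^ (-β) ∂ν.prod ν =
      rieszConst (finrank ℝ V) β * ∫ ξ, ‖ξ‖ ^ (β - finrank ℝ V) * ‖charFun ν ξ‖ ^ 2 := by
  have : Nontrivial V := finrank_pos_iff.1 (by exact_mod_cast hβ.trans hd)
  have htop {x : V} (hx : x ≠ 0) (a : ℝ) : ‖x‖ₑ ^ a < ⊤ :=
    (ENNReal.rpow_ne_top_of_ne_zero (enorm_ne_zero.2 hx) enorm_ne_top).lt_top
  have hleft : ∫ p, ‖p.1 - p.2‖ ^ (-β) ∂ν.prod ν =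
      (∫⁻ p, ‖p.1 - p.2‖ₑ ^ (-β) ∂ν.prod ν).toReal := by
    rw [← integral_toReal (by fun_prop)]
    · simp only [← ENNReal.toReal_rpow, toReal_enorm]
    · filter_upwards [ae_prod_fst_ne_snd ν ν] with p hp using htop (sub_ne_zero.2 hp) _
  have hright : ∫ ξ, ‖ξ‖ ^ (β - finrank ℝ V) * ‖charFun ν ξ‖ ^ 2 =
      (∫⁻ ξ, ‖ξ‖ₑ ^ (β - finrank ℝ V) * ‖charFun ν ξ‖ₑ ^ 2).toReal := by
    rw [← integral_toReal (by fun_prop)]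
    · simp only [ENNReal.toReal_mul, ENNReal.toReal_pow, ← ENNReal.toReal_rpow, toReal_enorm]
    · filter_upwards [Measure.ae_ne volume (0 : V)] with ξ hξ
      exact ENNReal.mul_lt_top (htop hξ _) (ENNReal.pow_lt_top enorm_lt_top)
  rw [hleft, hright, lintegral_enorm_sub_rpow_neg hβ hd, ENNReal.toReal_mul,
    ENNReal.toReal_ofReal (rieszConst_nonneg hβ.le hd.le)]

end RieszEnergy

section RotationInvariant

open scoped RealInnerProductSpace

variable {V : Type*} [NormedAddCommGroup V] [InnerProductSpace ℝ V] [MeasurableSpace V]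
  [BorelSpace V] {μ : Measure V}

lemma charFun_map_linearIsometryEquiv (L : V ≃ₗᵢ[ℝ] V) (ξ : V) :
    charFun (μ.map L) (L ξ) = charFun μ ξ := by
  simp_rw [charFun_apply]
  exact (L.toHomeomorph.measurableEmbedding.integral_map _).trans (by simp [L.inner_map_map])

lemma charFun_eq_of_norm_eq (hμ : ∀ L : V ≃ₗᵢ[ℝ] V, μ.map L = μ) {ξ η : V} (h : ‖ξ‖ = ‖η‖) :
    charFun μ ξ = charFun μ η := by
  let L : V ≃ₗᵢ[ℝ] V := Submodule.reflection (Submodule.span ℝ {ξ - η})ᗮ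
  rw [← charFun_map_linearIsometryEquiv L ξ, hμ L, Submodule.reflection_sub h]

lemma charFun_eq_integral_cos [SecondCountableTopology V] [IsFiniteMeasure μ]
    (hμ : μ.map Neg.neg = μ) (ξ : V) :
    charFun μ ξ = (∫ x, cos ⟪x, ξ⟫ ∂μ : ℝ) := by
  have heven : charFun μ (-ξ) = charFun μ ξ := by
    conv_rhs => rw [← hμ]
    exact (charFun_map_linearIsometryEquiv (LinearIsometryEquiv.neg ℝ) (-ξ) ▸ by simp)
  have hint : Integrable (fun x => Complex.exp (⟪x, ξ⟫ * Complex.I)) μ :=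
    .of_bound (Continuous.aestronglyMeasurable (by fun_prop)) 1 (.of_forall fun x => by simp)
  have hre : (charFun μ ξ).re = ∫ x, cos ⟪x, ξ⟫ ∂μ := by
    rw [charFun_apply]
    exact (integral_re hint).symm.trans (by simp [Complex.exp_ofReal_mul_I_re])
  rw [← hre, Complex.conj_eq_iff_re.1 ((charFun_neg ξ).symm.trans heven)]

lemma map_linearIsometryEquiv_restrict_ball [FiniteDimensional ℝ V] (L : V ≃ₗᵢ[ℝ] V) (r : ℝ) :
    ((volume : Measure V).restrict (ball 0 r)).map L = volume.restrict (ball 0 r) := by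
  have h := L.measurePreserving.restrict_preimage (s := ball (0 : V) r) measurableSet_ball
  have hball : L ⁻¹' ball 0 r = ball 0 r := by
    rw [L.preimage_ball, map_zero]
  rw [hball] at h
  exact h.map_eq

end RotationInvariant

section Disk

open scoped RealInnerProductSpace

lemma map_apply_zero_restrict_ball {r : ℝ} (hr : 0 ≤ r) :
    ((volume : Measure E2).restrict (ball 0 r)).map (· 0) =
      volume.withDensity fun a => .ofReal (2 * √(r ^ 2 - a ^ 2)) := by
  have hcoord : MeasurePreserving (fun x : E2 => (x 0, x 1)) volume (volume.prod volume) :=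
    (volume_preserving_finTwoArrow ℝ).comp (PiLp.volume_preserving_ofLp (Fin 2))
  ext s hs
  let S : Set (ℝ × ℝ) := {p | p.1 ∈ s ∧ p.2 ^ 2 < r ^ 2 - p.1 ^ 2}
  have hS : MeasurableSet S :=
    (measurable_fst hs).inter <| measurableSet_lt (f := fun p : ℝ × ℝ => p.2 ^ 2)
      (g := fun p => r ^ 2 - p.1 ^ 2) (by fun_prop) (by fun_prop)
  have hpre : (fun x : E2 => x 0) ⁻¹' s ∩ ball 0 r = (fun x : E2 => (x 0, x 1)) ⁻¹' S := by
    ext x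
    rw [mem_inter_iff, mem_ball_zero_iff, ← sq_lt_sq₀ (norm_nonneg x) hr,
      EuclideanSpace.norm_sq_eq, Fin.sum_univ_two]
    simp only [S, mem_preimage, mem_ofPred_eq, Real.norm_eq_abs, sq_abs, lt_sub_iff_add_lt']
  have hslice (a : ℝ) : volume (Prod.mk a ⁻¹' S) =
      s.indicator (fun a => .ofReal (2 * √(r ^ 2 - a ^ 2))) a := by
    by_cases ha : a ∈ s
    · have : Prod.mk a ⁻¹' S = Ioo (-√(r ^ 2 - a ^ 2)) √(r ^ 2 - a ^ 2) := by
        ext b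
        simp [S, ha, sq_lt]
      rw [this, volume_Ioo, indicator_of_mem ha, sub_neg_eq_add, two_mul]
    · simp [S, ha]
  have hfst : Measurable fun x : E2 => x 0 := by fun_prop
  rw [Measure.map_apply hfst hs, Measure.restrict_apply (hfst hs), hpre,
    hcoord.measure_preimage hS.nullMeasurableSet, Measure.prod_apply hS, withDensity_apply _ hs,
    ← lintegral_indicator hs]
  exact lintegral_congr hslice

lemma integral_sqrt_sq_sub_sq_mul {r : ℝ} (hr : 0 ≤ r) {g : ℝ → ℝ} (hg : Continuous g) :
    ∫ a in -r..r, √(r ^ 2 - a ^ 2) * g a = r ^ 2 * ∫ θ in 0..π, sin θ ^ 2 * g (r * cos θ) := by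
  have hsubst := intervalIntegral.integral_comp_mul_deriv (a := 0) (b := π)
    (f := fun θ => r * cos θ) (f' := fun θ => r * -sin θ) (g := fun a => √(r ^ 2 - a ^ 2) * g a)
    (fun θ _ => (hasDerivAt_cos θ).const_mul r) (by fun_prop) (by fun_prop)
  rw [cos_zero, cos_pi, mul_one, mul_neg_one] at hsubst
  rw [intervalIntegral.integral_symm, ← hsubst, ← intervalIntegral.integral_const_mul,
    ← intervalIntegral.integral_neg]
  refine intervalIntegral.integral_congr fun θ hθ => ?_
  rw [uIcc_of_le pi_pos.le] at hθ
  have hsqrt : √(r ^ 2 - (r * cos θ) ^ 2) = r * sin θ := by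
    rw [mul_pow, ← mul_one_sub, ← sin_sq, ← mul_pow,
      sqrt_sq (mul_nonneg hr (sin_nonneg_of_mem_Icc hθ))]
  simp only [Function.comp, hsqrt]
  ring

lemma charFun_restrict_ball {r : ℝ} (hr : 0 ≤ r) {ξ : E2} (hξ : ξ ≠ 0) :
    charFun (volume.restrict (ball 0 r)) ξ = (2 * π * r * J1 (r * ‖ξ‖) / ‖ξ‖ : ℝ) := by
  have : IsFiniteMeasure ((volume : Measure E2).restrict (ball 0 r)) :=
    isFiniteMeasure_restrict.2 measure_ball_lt_top.ne
  have hrot := map_linearIsometryEquiv_restrict_ball (V := E2) (r := r)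
  have hnorm : ‖ξ‖ = ‖EuclideanSpace.single (0 : Fin 2) ‖ξ‖‖ := by simp
  rw [charFun_eq_of_norm_eq hrot hnorm, charFun_eq_integral_cos (hrot (LinearIsometryEquiv.neg ℝ)),
    Complex.ofReal_inj]
  have hξ : ‖ξ‖ ≠ 0 := norm_ne_zero_iff.2 hξ
  calc ∫ x : E2 in ball 0 r, cos ⟪x, EuclideanSpace.single 0 ‖ξ‖⟫
    _ = ∫ a, cos (‖ξ‖ * a) ∂((volume : Measure E2).restrict (ball 0 r)).map (· 0) := by
      rw [integral_map (by fun_prop) (by fun_prop)]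
      simp [EuclideanSpace.inner_single_right]
    _ = ∫ a, 2 * √(r ^ 2 - a ^ 2) * cos (‖ξ‖ * a) := by
      rw [map_apply_zero_restrict_ball hr, integral_withDensity_eq_integral_toReal_smul
        (by fun_prop) (.of_forall fun _ => ENNReal.ofReal_lt_top)]
      simp only [ENNReal.toReal_ofReal (mul_nonneg zero_le_two (sqrt_nonneg _)), smul_eq_mul]
    _ = ∫ a in -r..r, 2 * √(r ^ 2 - a ^ 2) * cos (‖ξ‖ * a) := by
      rw [intervalIntegral.integral_of_le (by linarith),
        setIntegral_eq_integral_of_forall_compl_eq_zero]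
      intro a ha
      have hra : r ^ 2 ≤ a ^ 2 := by
        rw [← sq_abs a]
        exact pow_le_pow_left₀ hr (le_abs.2 (by grind)) 2
      rw [sqrt_eq_zero_of_nonpos (sub_nonpos.2 hra), mul_zero, zero_mul]
    _ = 2 * π * r * J1 (r * ‖ξ‖) / ‖ξ‖ := by
      have hassoc (θ : ℝ) : ‖ξ‖ * (r * cos θ) = r * ‖ξ‖ * cos θ := by ring
      simp_rw [mul_assoc (2 : ℝ) √_, intervalIntegral.integral_const_mul,
        integral_sqrt_sq_sub_sq_mul hr (g := fun a => cos (‖ξ‖ * a)) (by fun_prop), J1, hassoc]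
      field_simp

lemma rieszConst_two (β : ℝ) : rieszConst 2 β = cBeta β := by
  rw [rieszConst, cBeta, sub_div, div_self two_ne_zero, rpow_one]

lemma integral_norm_sub_rpow_neg_ball_prod_ball {β : ℝ} (hβ : 0 < β) (hβ2 : β < 2) :
    ∫ p in ball (0 : E2) 1 ×ˢ ball (0 : E2) 1, ‖p.1 - p.2‖ ^ (-β) =
      4 * π ^ 2 * cBeta β * kappaBeta β := by
  have : IsFiniteMeasure ((volume : Measure E2).restrict (ball 0 1)) :=
    isFiniteMeasure_restrict.2 measure_ball_lt_top.ne
  have hfinrank : (finrank ℝ E2 : ℝ) = 2 := by simp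
  have htransform : ∀ᵐ ξ : E2, ‖ξ‖ ^ (β - 2) * ‖charFun (volume.restrict (ball 0 1)) ξ‖ ^ 2 =
      4 * π ^ 2 * (‖ξ‖ ^ (β - 4) * J1 ‖ξ‖ ^ 2) := by
    filter_upwards [Measure.ae_ne volume 0] with ξ hξ
    have hpos : 0 < ‖ξ‖ := norm_pos_iff.2 hξ
    rw [charFun_restrict_ball zero_le_one hξ, Complex.norm_real, norm_eq_abs, sq_abs, one_mul,
      mul_one, show β - 2 = β - 4 + (2 : ℕ) by push_cast; ring, rpow_add_natCast hpos.ne']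
    field_simp
    ring
  rw [Measure.volume_eq_prod, ← Measure.prod_restrict,
    integral_norm_sub_rpow_neg hβ (hβ2.trans_eq hfinrank.symm), hfinrank, rieszConst_two,
    integral_congr_ae htransform, integral_const_mul, kappaBeta]
  ring

end Disk

/-- For `β ∈ (0,2)`, `t₁, t₂ > 0` and `s ∈ [0, min(t₁,t₂)]`,
`Ψ_R(t₁,t₂;s) → 4π² c_β κ_β (t₁-s)(t₂-s)` as `R → ∞`. -/
theorem stmt_4 (β t₁ t₂ s : ℝ) (hβ0 : 0 < β) (hβ2 : β < 2) (ht₁ : 0 < t₁) (ht₂ : 0 < t₂)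
    (hs : s ∈ Set.Icc 0 (min t₁ t₂)) :
    Filter.Tendsto (fun R : ℝ => Psi β t₁ t₂ R s) Filter.atTop
      (nhds (4 * π ^ 2 * cBeta β * kappaBeta β * ((t₁ - s) * (t₂ - s)))) := by
  have henergy := integral_norm_sub_rpow_neg_ball_prod_ball hβ0 hβ2
  have hlimit := tendsto_Psi hβ2 (hs.2.trans (min_le_left _ _)) (hs.2.trans (min_le_right _ _))
  rwa [henergy, mul_comm] at hlimit
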